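/- Let A be a Banach algebra with a bounded approximate identity. Then the following are equivalent: (i) A is amenable; (ii) A ⊗̂ A is amenable; (iii) A ⊗̂ A^{op} is amenable. -/

import Mathlib

open Filter Topology MulOpposite

/-- A Banach `A`-bimodule structure on the Banach space `X`:
`L a x = a • x` (left action), `R a x = x • a` (right action),
given as continuous bilinear maps. -/
structure BanachBimodule (A X : Type*) [NonUnitalNormedRing A] [NormedSpace ℂ A]
    [NormedAddCommGroup X] [NormedSpace ℂ X] where
  L : A →L[ℂ] X →L[ℂ] X
  R : A →L[ℂ] X →L[ℂ] X
  L_mul : ∀ a b : A, L (a * b) = (L a).comp (L b)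
  R_mul : ∀ a b : A, R (a * b) = (R b).comp (R a)
  LR_comm : ∀ (a b : A) (x : X), R b (L a x) = L a (R b x)

/-- `D : A → X*` is a derivation into the dual Banach bimodule of `X`, written
pointwise: `D(ab) = a·D(b) + D(a)·b` where `(a·f)(x) = f(x·a)`, `(f·a)(x) = f(a·x)`. -/
def IsDualDerivation {A X : Type*} [NonUnitalNormedRing A] [NormedSpace ℂ A]
    [NormedAddCommGroup X] [NormedSpace ℂ X] (σ : BanachBimodule A X)
    (D : A →L[ℂ] (X →L[ℂ] ℂ)) : Prop :=
  ∀ (a b : A) (x : X), D (a * b) x = D b (σ.R a x) + D a (σ.L b x)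

/-- `D` is inner: `D a = a·f − f·a` for some `f ∈ X*`. -/
def IsInnerDualDerivation {A X : Type*} [NonUnitalNormedRing A] [NormedSpace ℂ A]
    [NormedAddCommGroup X] [NormedSpace ℂ X] (σ : BanachBimodule A X)
    (D : A →L[ℂ] (X →L[ℂ] ℂ)) : Prop :=
  ∃ f : X →L[ℂ] ℂ, ∀ (a : A) (x : X), D a x = f (σ.R a x) - f (σ.L a x)

/-- A Banach algebra is amenable if every continuous derivation into every dual
Banach bimodule is inner. -/
def Amenable (A : Type*) [NonUnitalNormedRing A] [NormedSpace ℂ A] : Prop :=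
  ∀ (X : Type) (_ : NormedAddCommGroup X) (_ : NormedSpace ℂ X) (_ : CompleteSpace X)
    (σ : BanachBimodule A X) (D : A →L[ℂ] (X →L[ℂ] ℂ)),
    IsDualDerivation σ D → IsInnerDualDerivation σ D

/-- Weak amenability: every continuous derivation `D : A → A*` into the dual
bimodule (`(a·f)(x) = f(xa)`, `(f·a)(x) = f(ax)`) is inner. -/
def WeaklyAmenable (A : Type*) [NonUnitalNormedRing A] [NormedSpace ℂ A] : Prop :=
  ∀ D : A →L[ℂ] (A →L[ℂ] ℂ),
    (∀ a b x : A, D (a * b) x = D b (x * a) + D a (b * x)) →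
    ∃ f : A →L[ℂ] ℂ, ∀ a x : A, D a x = f (x * a) - f (a * x)

/-- A bounded net in a normed space. -/
structure BddNet (X : Type*) [Norm X] where
  ι : Type
  [dir : SemilatticeSup ι]
  [ne : Nonempty ι]
  z : ι → X
  C : ℝ
  bdd : ∀ i, ‖z i‖ ≤ C

/-- The `atTop` filter of the (directed) index of a bounded net. -/
def BddNet.filter {X : Type*} [Norm X] (S : BddNet X) : Filter S.ι :=
  letI := S.dir; Filter.atTop

/-- The bounded net `S` is a two-sided bounded approximate identity for `A`. -/
def IsBAI {A : Type*} [NonUnitalNormedRing A] (S : BddNet A) : Prop :=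
  ∀ a : A, Tendsto (fun i => a * S.z i) S.filter (nhds a) ∧
           Tendsto (fun i => S.z i * a) S.filter (nhds a)

/-- `A` has a (two-sided) bounded approximate identity. -/
def HasBAI (A : Type*) [NonUnitalNormedRing A] : Prop := ∃ S : BddNet A, IsBAI S

/-- `T`, together with the continuous bilinear map `ι`, is (a realization of) the
projective tensor product `A ⊗̂ B` of the Banach algebras `A` and `B`:
`ι` is multiplicative ((a⊗b)(c⊗d) = ac⊗bd), satisfies the cross-norm estimate,
has dense linear span, and has the universal (norm-decreasing lifting) property
of the projective tensor norm. -/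
structure IsProjTensorProduct (A B T : Type*)
    [NonUnitalNormedRing A] [NormedSpace ℂ A] [NonUnitalNormedRing B] [NormedSpace ℂ B]
    [NonUnitalNormedRing T] [NormedSpace ℂ T] [CompleteSpace T] where
  ι : A →L[ℂ] B →L[ℂ] T
  norm_ι : ∀ a b, ‖ι a b‖ ≤ ‖a‖ * ‖b‖
  ι_mul : ∀ (a c : A) (b d : B), ι a b * ι c d = ι (a * c) (b * d)
  dense_span : Dense (Submodule.span ℂ (Set.range fun p : A × B => ι p.1 p.2) : Set T)
  lift : ∀ (E : Type) (_ : NormedAddCommGroup E) (_ : NormedSpace ℂ E) (_ : CompleteSpace E)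
    (φ : A →L[ℂ] B →L[ℂ] E), ∃ Φ : T →L[ℂ] E, (∀ a b, Φ (ι a b) = φ a b) ∧ ‖Φ‖ ≤ ‖φ‖

/-!
A bounded approximate identity may be refined to an ultrafilter `u`, along which every bounded
family of functionals converges weak-*. Such limits show that a derivation vanishing on `A • X` or
on `X • A` is inner, so by Hahn–Banach only essential bimodules matter.

If `A` and `B` are amenable and `X` is an essential bimodule over `A ⊗̂ B`, then `a ⊗ 1` and
`1 ⊗ b` act on `X` as limits along approximate units. A derivation `D` restricts to a derivation
`a ↦ D (a ⊗ 1)` of `A`; subtracting an inner derivation makes it vanish. Then `b ↦ D (1 ⊗ b)`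
takes values in the functionals that `A` leaves invariant, and amenability of `B`, applied to the
bidual of this space, makes it inner through an invariant functional, which implements all of `D`.

Conversely, given a derivation `D : A → X*` and a nonzero bimodule homomorphism `m : B → Y*`,
the map `a ⊗ b ↦ (w ↦ m b (w (D a)))` is a derivation into the dual of the space of operators
`w : X* → Y`. Evaluating a functional implementing it at rank-one operators `w = f ⊗ y`, with `y`
such that an approximate unit of `B` acts trivially on `y` and `m` does not vanish on it, shows that
`D` is inner. For `B = A` or `B = Aᵐᵒᵖ` such an `m` comes from the left or right action of `A` on
`X`, unless that action is zero, in which case `D` is inner for the first reason.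
-/

section BoundedApproximateUnit

/-- A two-sided bounded approximate identity of a normed algebra, as a filter: the image filter of
a bounded approximate identity indexed by a directed set is of this form, and so is every finer
proper filter. -/
structure IsBoundedApproximateUnit {A : Type*} [NonUnitalNormedRing A] (u : Filter A) : Prop
    extends u.IsApproximateUnit where
  exists_norm_le : ∃ C : ℝ, ∀ᶠ e in u, ‖e‖ ≤ C

variable {A : Type*} [NonUnitalNormedRing A]

namespace IsBoundedApproximateUnit

theorem mono {u v : Filter A} (hu : IsBoundedApproximateUnit u) (hvu : v ≤ u) [v.NeBot] :
    IsBoundedApproximateUnit v where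
  tendsto_mul_left a := (hu.tendsto_mul_left a).mono_left hvu
  tendsto_mul_right a := (hu.tendsto_mul_right a).mono_left hvu
  exists_norm_le := hu.exists_norm_le.imp fun _ hC => hvu hC

theorem map_op {u : Filter A} (hu : IsBoundedApproximateUnit u) :
    IsBoundedApproximateUnit (u.map op) where
  neBot := hu.neBot.map op
  tendsto_mul_left a := tendsto_map'_iff.2 <|
    (continuous_op.tendsto a.unop).comp (hu.tendsto_mul_right a.unop)
  tendsto_mul_right a := tendsto_map'_iff.2 <|
    (continuous_op.tendsto a.unop).comp (hu.tendsto_mul_left a.unop)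
  exists_norm_le := hu.exists_norm_le

end IsBoundedApproximateUnit

theorem HasBAI.exists_ultrafilter (hA : HasBAI A) :
    ∃ u : Ultrafilter A, IsBoundedApproximateUnit (u : Filter A) := by
  obtain ⟨S, hS⟩ := hA
  let _ := S.dir
  let _ := S.ne
  have hmap : IsBoundedApproximateUnit (S.filter.map S.z) :=
    { neBot := atTop_neBot.map S.z
      tendsto_mul_left := fun a => tendsto_map'_iff.2 (hS a).1
      tendsto_mul_right := fun a => tendsto_map'_iff.2 (hS a).2
      exists_norm_le := ⟨S.C, eventually_map.2 <| Eventually.of_forall S.bdd⟩ }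
  let _ := hmap.neBot
  exact ⟨Ultrafilter.of _, hmap.mono (Ultrafilter.of_le _)⟩

end BoundedApproximateUnit

section Limits

theorem exists_tendsto_of_eventually_norm_le {I Y : Type*} [SeminormedAddCommGroup Y]
    [ProperSpace Y] {u : Ultrafilter I} {f : I → Y} {C : ℝ} (hC : ∀ᶠ i in u, ‖f i‖ ≤ C) :
    ∃ y, Tendsto f u (𝓝 y) := by
  obtain ⟨y, -, hy⟩ := (isCompact_closedBall (0 : Y) C).ultrafilter_le_nhds (u.map f)
    (le_principal_iff.2 <| hC.mono fun i hi => mem_closedBall_zero_iff.2 hi)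
  exact ⟨y, hy⟩

variable {I X Y : Type*}
  [NormedAddCommGroup X] [NormedSpace ℂ X] [NormedAddCommGroup Y] [NormedSpace ℂ Y] {l : Filter I}

/-- The vectors on which a family of operators converges to the operator `Φ`. -/
def tendstoSubmodule (Ψ : I → X →L[ℂ] Y) (l : Filter I) (Φ : X →L[ℂ] Y) : Submodule ℂ X where
  carrier := {x | Tendsto (fun i => Ψ i x) l (𝓝 (Φ x))}
  zero_mem' := by simpa using tendsto_const_nhds
  add_mem' hx hy := by simpa using hx.add hy
  smul_mem' c x hx := by simpa using hx.const_smul c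

/-- The vectors on which a family of operators converges. -/
def convergenceSubmodule (Ψ : I → X →L[ℂ] Y) (l : Filter I) : Submodule ℂ X where
  carrier := {x | ∃ y, Tendsto (fun i => Ψ i x) l (𝓝 y)}
  zero_mem' := ⟨0, by simpa using tendsto_const_nhds⟩
  add_mem' := fun ⟨y, hy⟩ ⟨z, hz⟩ => ⟨y + z, by simpa using hy.add hz⟩
  smul_mem' c x := fun ⟨y, hy⟩ => ⟨c • y, by simpa using hy.const_smul c⟩

theorem isClosed_tendstoSubmodule {Ψ : I → X →L[ℂ] Y} {C : ℝ} (hC : ∀ᶠ i in l, ‖Ψ i‖ ≤ C)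
    (Φ : X →L[ℂ] Y) : IsClosed (tendstoSubmodule Ψ l Φ : Set X) := by
  rw [isClosed_iff_frequently]
  intro x hx
  refine Metric.tendsto_nhds.2 fun ε hε => ?_
  have hclose : ∀ᶠ y in 𝓝 x, (C + ‖Φ‖) * ‖x - y‖ < ε / 2 :=
    ContinuousAt.eventually_lt (by fun_prop) (by fun_prop) (by simpa using half_pos hε)
  obtain ⟨y, hy, hxy⟩ := (hx.and_eventually hclose).exists
  filter_upwards [hC, Metric.tendsto_nhds.1 hy (ε / 2) (half_pos hε)] with i hi hyi
  rw [dist_eq_norm] at hyi ⊢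
  have hi' : ‖Ψ i - Φ‖ ≤ C + ‖Φ‖ := (norm_sub_le _ _).trans (add_le_add_left hi _)
  calc ‖Ψ i x - Φ x‖ = ‖(Ψ i - Φ) (x - y) + (Ψ i y - Φ y)‖ := by
        congr 1
        simp only [sub_apply, map_sub]
        abel
    _ ≤ (C + ‖Φ‖) * ‖x - y‖ + ‖Ψ i y - Φ y‖ :=
      (norm_add_le _ _).trans (add_le_add_left ((Ψ i - Φ).le_of_opNorm_le hi' _) _)
    _ < ε := by linarith

theorem isClosed_convergenceSubmodule [CompleteSpace Y] [l.NeBot] {Ψ : I → X →L[ℂ] Y} {C : ℝ}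
    (hC : ∀ᶠ i in l, ‖Ψ i‖ ≤ C) : IsClosed (convergenceSubmodule Ψ l : Set X) := by
  -- Convergence is the Cauchy condition, that is, `Ψ i - Ψ j` tends to zero along `l ×ˢ l`.
  have hCauchy : (convergenceSubmodule Ψ l : Set X) =
      tendstoSubmodule (fun p : I × I => Ψ p.1 - Ψ p.2) (l ×ˢ l) 0 := by
    ext x
    change (∃ y, Tendsto (fun i => Ψ i x) l (𝓝 y)) ↔
      Tendsto (fun p : I × I => Ψ p.1 x - Ψ p.2 x) (l ×ˢ l) (𝓝 0)
    rw [← cauchy_map_iff_exists_tendsto, cauchy_map_iff, uniformity_eq_comap_nhds_zero_swapped,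
      tendsto_comap_iff]
    exact and_iff_right ‹_›
  rw [hCauchy]
  refine isClosed_tendstoSubmodule (C := C + C) ?_ 0
  filter_upwards [hC.prod_mk hC] with p hp
  exact (norm_sub_le _ _).trans (add_le_add hp.1 hp.2)

theorem exists_clm_tendsto [l.NeBot] {Ψ : I → X →L[ℂ] Y} {C : ℝ} (hC : ∀ᶠ i in l, ‖Ψ i‖ ≤ C)
    (hΨ : ∀ x, ∃ y, Tendsto (fun i => Ψ i x) l (𝓝 y)) :
    ∃ Φ : X →L[ℂ] Y, ‖Φ‖ ≤ C ∧ ∀ x, Tendsto (fun i => Ψ i x) l (𝓝 (Φ x)) := by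
  choose Φ hΦ using hΨ
  have hC₀ : 0 ≤ C := by
    obtain ⟨i, hi⟩ := hC.exists
    exact (norm_nonneg _).trans hi
  refine ⟨(linearMapOfTendsto Φ (fun i => (Ψ i : X →ₗ[ℂ] Y)) (tendsto_pi_nhds.2 hΦ)).mkContinuous C
    fun x => ?_, LinearMap.mkContinuous_norm_le _ hC₀ _, hΦ⟩
  exact le_of_tendsto (hΦ x).norm (hC.mono fun i hi => (Ψ i).le_of_opNorm_le hi x)

theorem exists_clm₂_tendsto {V : Type*} [NormedAddCommGroup V] [NormedSpace ℂ V] [l.NeBot]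
    {Ψ : I → V →L[ℂ] X →L[ℂ] Y} {C : ℝ} (hC : ∀ᶠ i in l, ‖Ψ i‖ ≤ C)
    (hΨ : ∀ v x, ∃ y, Tendsto (fun i => Ψ i v x) l (𝓝 y)) :
    ∃ Φ : V →L[ℂ] X →L[ℂ] Y, ∀ v x, Tendsto (fun i => Ψ i v x) l (𝓝 (Φ v x)) := by
  have hCv (v : V) : ∀ᶠ i in l, ‖Ψ i v‖ ≤ C * ‖v‖ := hC.mono fun i hi => (Ψ i).le_of_opNorm_le hi v
  choose Φ hΦ_norm hΦ using fun v => exists_clm_tendsto (hCv v) (hΨ v)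
  refine ⟨LinearMap.mkContinuous
    { toFun := Φ
      map_add' := fun v w => ?_
      map_smul' := fun c v => ?_ } C hΦ_norm, hΦ⟩
  · ext x
    exact tendsto_nhds_unique (hΦ (v + w) x) (by simpa using (hΦ v x).add (hΦ w x))
  · ext x
    exact tendsto_nhds_unique (hΦ (c • v) x) (by simpa using (hΦ v x).const_smul c)

end Limits

section Bimodules

variable {A X : Type*} [NonUnitalNormedRing A] [NormedSpace ℂ A]
  [NormedAddCommGroup X] [NormedSpace ℂ X]

namespace BanachBimodule

/-- The bimodule of operators `X → Y`, with `(a • w) x = w (x • a)` and `(w • a) x = w (a • x)`. -/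
noncomputable def precomp (σ : BanachBimodule A X) (Y : Type*) [NormedAddCommGroup Y]
    [NormedSpace ℂ Y] : BanachBimodule A (X →L[ℂ] Y) where
  L := (ContinuousLinearMap.compL ℂ X X Y).flip.comp σ.R
  R := (ContinuousLinearMap.compL ℂ X X Y).flip.comp σ.L
  L_mul a b := by
    ext w x
    simp [σ.R_mul]
  R_mul a b := by
    ext w x
    simp [σ.L_mul]
  LR_comm a b w := by
    ext x
    simp [σ.LR_comm]

/-- The dual bimodule `X*`. -/
noncomputable abbrev dual (σ : BanachBimodule A X) : BanachBimodule A (X →L[ℂ] ℂ) :=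
  σ.precomp ℂ

/-- The bimodule of operators `U → X`, with `(a • w) u = a • w u` and `(w • a) u = w u • a`. -/
noncomputable def postcomp (σ : BanachBimodule A X) (U : Type*) [NormedAddCommGroup U]
    [NormedSpace ℂ U] : BanachBimodule A (U →L[ℂ] X) where
  L := (ContinuousLinearMap.compL ℂ U X X).comp σ.L
  R := (ContinuousLinearMap.compL ℂ U X X).comp σ.R
  L_mul a b := by
    ext w u
    simp [σ.L_mul]
  R_mul a b := by
    ext w u
    simp [σ.R_mul]
  LR_comm a b w := by
    ext u
    simp [σ.LR_comm]

/-- The `A`-bimodule underlying an `Aᵐᵒᵖ`-bimodule; the two actions are exchanged. -/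
noncomputable def unop (σ : BanachBimodule Aᵐᵒᵖ X) : BanachBimodule A X where
  L := σ.R.comp (opContinuousLinearEquiv ℂ).toContinuousLinearMap
  R := σ.L.comp (opContinuousLinearEquiv ℂ).toContinuousLinearMap
  L_mul a b := σ.R_mul (op b) (op a)
  R_mul a b := σ.L_mul (op b) (op a)
  LR_comm a b x := (σ.LR_comm (op b) (op a) x).symm

/-- The subspace `p` is a sub-bimodule. -/
structure IsInvariant (σ : BanachBimodule A X) (p : Submodule ℂ X) : Prop where
  L_mem : ∀ (a : A), ∀ x ∈ p, σ.L a x ∈ p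
  R_mem : ∀ (a : A), ∀ x ∈ p, σ.R a x ∈ p

/-- Every action operator of `σ` commutes with every action operator of `τ`. -/
structure CommutesWith {B : Type*} [NonUnitalNormedRing B] [NormedSpace ℂ B]
    (σ : BanachBimodule A X) (τ : BanachBimodule B X) : Prop where
  LL : ∀ a b x, σ.L a (τ.L b x) = τ.L b (σ.L a x)
  LR : ∀ a b x, σ.L a (τ.R b x) = τ.R b (σ.L a x)
  RL : ∀ a b x, σ.R a (τ.L b x) = τ.L b (σ.R a x)
  RR : ∀ a b x, σ.R a (τ.R b x) = τ.R b (σ.R a x)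

end BanachBimodule

/-- The restriction of a continuous family of operators to an invariant subspace. -/
noncomputable def restrictAction (Λ : A →L[ℂ] X →L[ℂ] X) (p : Submodule ℂ X)
    (hp : ∀ (a : A), ∀ x ∈ p, Λ a x ∈ p) : A →L[ℂ] p →L[ℂ] p :=
  LinearMap.mkContinuous₂
    (LinearMap.mk₂ ℂ (fun a (x : p) => ⟨Λ a x, hp a x x.2⟩) (by intros; ext; simp)
      (by intros; ext; simp) (by intros; ext; simp) (by intros; ext; simp))
    ‖Λ‖ fun a x => Λ.le_opNorm₂ a x

/-- The restriction to a subspace of a map into the dual space. -/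
noncomputable def restrictDual {V : Type*} [NormedAddCommGroup V] [NormedSpace ℂ V]
    (D : V →L[ℂ] X →L[ℂ] ℂ) (p : Submodule ℂ X) : V →L[ℂ] p →L[ℂ] ℂ :=
  ((ContinuousLinearMap.compL ℂ p X ℂ).flip p.subtypeL).comp D

namespace BanachBimodule

variable (σ : BanachBimodule A X)

/-- The bimodule structure of a sub-bimodule. -/
noncomputable def restrict (p : Submodule ℂ X) (hp : σ.IsInvariant p) : BanachBimodule A p where
  L := restrictAction σ.L p hp.L_mem
  R := restrictAction σ.R p hp.R_mem
  L_mul a b := by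
    ext x
    exact DFunLike.congr_fun (σ.L_mul a b) (x : X)
  R_mul a b := by
    ext x
    exact DFunLike.congr_fun (σ.R_mul a b) (x : X)
  LR_comm a b x := Subtype.ext (σ.LR_comm a b x)

/-- The inner derivation `a ↦ a • f - f • a` into the dual bimodule `X*`. -/
noncomputable def innerDerivation (f : X →L[ℂ] ℂ) : A →L[ℂ] X →L[ℂ] ℂ :=
  (ContinuousLinearMap.compL ℂ X X ℂ f).comp (σ.R - σ.L)

theorem innerDerivation_apply (f : X →L[ℂ] ℂ) (a : A) (x : X) :
    σ.innerDerivation f a x = f (σ.R a x) - f (σ.L a x) :=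
  map_sub f _ _

variable {σ}

theorem L_mul_apply (a b : A) (x : X) : σ.L (a * b) x = σ.L a (σ.L b x) :=
  DFunLike.congr_fun (σ.L_mul a b) x

theorem R_mul_apply (a b : A) (x : X) : σ.R (a * b) x = σ.R b (σ.R a x) :=
  DFunLike.congr_fun (σ.R_mul a b) x

end BanachBimodule

variable {σ : BanachBimodule A X} {D : A →L[ℂ] X →L[ℂ] ℂ}

theorem IsDualDerivation.sub_innerDerivation (hD : IsDualDerivation σ D) (f : X →L[ℂ] ℂ) :
    IsDualDerivation σ (D - σ.innerDerivation f) := by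
  intro a b x
  simp only [sub_apply, hD a b x, σ.innerDerivation_apply, BanachBimodule.L_mul_apply,
    BanachBimodule.R_mul_apply, σ.LR_comm]
  ring

theorem IsInnerDualDerivation.of_sub_innerDerivation {f : X →L[ℂ] ℂ}
    (h : IsInnerDualDerivation σ (D - σ.innerDerivation f)) : IsInnerDualDerivation σ D := by
  obtain ⟨g, hg⟩ := h
  refine ⟨f + g, fun a x => ?_⟩
  have hax := hg a x
  rw [sub_apply, sub_apply, σ.innerDerivation_apply] at hax
  simp only [add_apply]
  linear_combination hax

theorem IsDualDerivation.restrict (hD : IsDualDerivation σ D) {p : Submodule ℂ X}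
    (hp : σ.IsInvariant p) : IsDualDerivation (σ.restrict p hp) (restrictDual D p) :=
  fun a b x => hD a b x

theorem Amenable.mulOpposite (hA : Amenable A) : Amenable Aᵐᵒᵖ := by
  intro X _ _ _ σ D hD
  obtain ⟨f, hf⟩ := hA X _ _ ‹_› σ.unop
    (D.comp (opContinuousLinearEquiv ℂ).toContinuousLinearMap)
    fun a b x => (hD (op b) (op a) x).trans (add_comm _ _)
  refine ⟨-f, fun a x => (hf a.unop x).trans ?_⟩
  exact (neg_sub_neg (f (σ.R a x)) (f (σ.L a x))).symm

theorem IsDualDerivation.isInner_of_restrictDual (hD : IsDualDerivation σ D) {p : Submodule ℂ X}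
    (hp : σ.IsInvariant p) (hDp : IsInnerDualDerivation (σ.restrict p hp) (restrictDual D p))
    (hvanish : ∀ D' : A →L[ℂ] X →L[ℂ] ℂ, IsDualDerivation σ D' →
      (∀ a, ∀ x ∈ p, D' a x = 0) → IsInnerDualDerivation σ D') :
    IsInnerDualDerivation σ D := by
  obtain ⟨g, hg⟩ := hDp
  obtain ⟨f, hfg, -⟩ := exists_extension_norm_eq p g
  refine (hvanish _ (hD.sub_innerDerivation f) fun a x hx => ?_).of_sub_innerDerivation
  rw [sub_apply, sub_apply, σ.innerDerivation_apply, sub_eq_zero]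
  refine (hg a ⟨x, hx⟩).trans ?_
  rw [← hfg, ← hfg]
  rfl

end Bimodules

section EssentialPart

variable {A X : Type*} [NonUnitalNormedRing A] [NormedSpace ℂ A]
  [NormedAddCommGroup X] [NormedSpace ℂ X]

/-- The closed linear span of the vectors `Λ a x`. -/
def essentialPart (Λ : A →L[ℂ] X →L[ℂ] X) : Submodule ℂ X :=
  (Submodule.span ℂ (Set.range fun p : A × X => Λ p.1 p.2)).topologicalClosure

theorem isClosed_essentialPart (Λ : A →L[ℂ] X →L[ℂ] X) : IsClosed (essentialPart Λ : Set X) :=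
  Submodule.isClosed_topologicalClosure _

theorem apply_mem_essentialPart (Λ : A →L[ℂ] X →L[ℂ] X) (a : A) (x : X) :
    Λ a x ∈ essentialPart Λ :=
  Submodule.le_topologicalClosure _ (Submodule.subset_span ⟨(a, x), rfl⟩)

theorem essentialPart_le {Λ : A →L[ℂ] X →L[ℂ] X} {p : Submodule ℂ X} (hp : IsClosed (p : Set X))
    (hΛ : ∀ a x, Λ a x ∈ p) : essentialPart Λ ≤ p :=
  Submodule.topologicalClosure_minimal _
    (Submodule.span_le.2 <| Set.range_subset_iff.2 fun q => hΛ q.1 q.2) hp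

theorem map_mem_essentialPart {Λ : A →L[ℂ] X →L[ℂ] X} {f : X →L[ℂ] X}
    (hf : ∀ a x, f (Λ a x) ∈ essentialPart Λ) : ∀ x ∈ essentialPart Λ, f x ∈ essentialPart Λ :=
  essentialPart_le (p := (essentialPart Λ).comap (f : X →ₗ[ℂ] X))
    ((isClosed_essentialPart Λ).preimage f.continuous) hf

namespace BanachBimodule

variable (σ : BanachBimodule A X)

theorem isInvariant_essentialPart_L : σ.IsInvariant (essentialPart σ.L) where
  L_mem a x _ := apply_mem_essentialPart σ.L a x
  R_mem b := map_mem_essentialPart fun a x => by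
    rw [σ.LR_comm]
    exact apply_mem_essentialPart σ.L a _

theorem isInvariant_essentialPart_R : σ.IsInvariant (essentialPart σ.R) where
  L_mem a := map_mem_essentialPart fun b x => by
    rw [← σ.LR_comm]
    exact apply_mem_essentialPart σ.R b _
  R_mem a x _ := apply_mem_essentialPart σ.R a x

/-- A Banach bimodule is essential if `A • X` and `X • A` both have dense linear span. -/
structure IsEssential : Prop where
  L_eq_top : essentialPart σ.L = ⊤
  R_eq_top : essentialPart σ.R = ⊤

end BanachBimodule

theorem mem_essentialPart_of_tendsto {Λ : A →L[ℂ] X →L[ℂ] X} {u : Filter A} [u.NeBot] {x : X}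
    (hx : Tendsto (fun e => Λ e x) u (𝓝 x)) : x ∈ essentialPart Λ :=
  (isClosed_essentialPart Λ).mem_of_tendsto hx <|
    Eventually.of_forall fun e => apply_mem_essentialPart Λ e x

namespace IsBoundedApproximateUnit

variable {u : Filter A}

theorem tendsto_apply_of_mem_essentialPart (hu : IsBoundedApproximateUnit u)
    {Λ : A →L[ℂ] X →L[ℂ] X} (hΛ : ∀ a x, Tendsto (fun e => Λ e (Λ a x)) u (𝓝 (Λ a x)))
    {x : X} (hx : x ∈ essentialPart Λ) : Tendsto (fun e => Λ e x) u (𝓝 x) := by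
  obtain ⟨C, hC⟩ := hu.exists_norm_le
  have hle : essentialPart Λ ≤ tendstoSubmodule Λ u (.id ℂ X) :=
    essentialPart_le (isClosed_tendstoSubmodule (hC.mono fun e he => Λ.le_opNorm_of_le he) _) hΛ
  exact hle hx

theorem tendsto_apply_mul_right (hu : IsBoundedApproximateUnit u) (f : A →L[ℂ] X) (a : A) :
    Tendsto (fun e => f (a * e)) u (𝓝 (f a)) :=
  (f.continuous.tendsto a).comp (hu.tendsto_mul_left a)

theorem tendsto_apply_mul_left (hu : IsBoundedApproximateUnit u) (f : A →L[ℂ] X) (a : A) :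
    Tendsto (fun e => f (e * a)) u (𝓝 (f a)) :=
  (f.continuous.tendsto a).comp (hu.tendsto_mul_right a)

variable {σ : BanachBimodule A X}

theorem tendsto_L_apply (hu : IsBoundedApproximateUnit u) {x : X} (hx : x ∈ essentialPart σ.L) :
    Tendsto (fun e => σ.L e x) u (𝓝 x) :=
  hu.tendsto_apply_of_mem_essentialPart
    (fun a x => by simpa [BanachBimodule.L_mul_apply] using
      hu.tendsto_apply_mul_left (σ.L.flip x) a) hx

theorem tendsto_R_apply (hu : IsBoundedApproximateUnit u) {x : X} (hx : x ∈ essentialPart σ.R) :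
    Tendsto (fun e => σ.R e x) u (𝓝 x) :=
  hu.tendsto_apply_of_mem_essentialPart
    (fun a x => by simpa [BanachBimodule.R_mul_apply] using
      hu.tendsto_apply_mul_right (σ.R.flip x) a) hx

end IsBoundedApproximateUnit

theorem IsBoundedApproximateUnit.exists_dual_tendsto {u : Ultrafilter A}
    (hu : IsBoundedApproximateUnit (u : Filter A)) (D : A →L[ℂ] X →L[ℂ] ℂ) :
    ∃ ψ : X →L[ℂ] ℂ, ∀ x, Tendsto (fun e => D e x) u (𝓝 (ψ x)) := by
  obtain ⟨C, hC⟩ := hu.exists_norm_le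
  have hbdd : ∀ᶠ e in u, ‖D e‖ ≤ ‖D‖ * C := hC.mono fun e he => D.le_opNorm_of_le he
  obtain ⟨ψ, -, hψ⟩ := exists_clm_tendsto hbdd fun x => exists_tendsto_of_eventually_norm_le
    (hbdd.mono fun e he => (D e).le_of_opNorm_le he x)
  exact ⟨ψ, hψ⟩

namespace IsDualDerivation

variable {σ : BanachBimodule A X} {D : A →L[ℂ] X →L[ℂ] ℂ} {u : Ultrafilter A}

theorem isInner_of_apply_L_eq_zero (hD : IsDualDerivation σ D)
    (hu : IsBoundedApproximateUnit (u : Filter A)) (h₀ : ∀ a b x, D a (σ.L b x) = 0) :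
    IsInnerDualDerivation σ D := by
  obtain ⟨ψ, hψ⟩ := hu.exists_dual_tendsto D
  refine ⟨ψ, fun a x => ?_⟩
  have hR : D a x = ψ (σ.R a x) := tendsto_nhds_unique
    (by simpa [hD a, h₀] using hu.tendsto_apply_mul_right (D.flip x) a) (hψ (σ.R a x))
  have hL : ψ (σ.L a x) = 0 := tendsto_nhds_unique (hψ (σ.L a x)) (by simp [h₀])
  rw [hR, hL, sub_zero]

theorem isInner_of_apply_R_eq_zero (hD : IsDualDerivation σ D)
    (hu : IsBoundedApproximateUnit (u : Filter A)) (h₀ : ∀ a b x, D a (σ.R b x) = 0) :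
    IsInnerDualDerivation σ D := by
  obtain ⟨ψ, hψ⟩ := hu.exists_dual_tendsto D
  refine ⟨-ψ, fun a x => ?_⟩
  have hL : D a x = ψ (σ.L a x) := tendsto_nhds_unique
    (by simpa [hD _ a, h₀] using hu.tendsto_apply_mul_left (D.flip x) a) (hψ (σ.L a x))
  have hR : ψ (σ.R a x) = 0 := tendsto_nhds_unique (hψ (σ.R a x)) (by simp [h₀])
  simp [hL, hR]

theorem isInner_of_restrict_essentialPart_L (hD : IsDualDerivation σ D)
    (hu : IsBoundedApproximateUnit (u : Filter A))
    (h : IsInnerDualDerivation (σ.restrict _ σ.isInvariant_essentialPart_L)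
      (restrictDual D (essentialPart σ.L))) : IsInnerDualDerivation σ D :=
  hD.isInner_of_restrictDual _ h fun _ hD' h₀ => hD'.isInner_of_apply_L_eq_zero hu
    fun a b x => h₀ a _ (apply_mem_essentialPart σ.L b x)

theorem isInner_of_restrict_essentialPart_R (hD : IsDualDerivation σ D)
    (hu : IsBoundedApproximateUnit (u : Filter A))
    (h : IsInnerDualDerivation (σ.restrict _ σ.isInvariant_essentialPart_R)
      (restrictDual D (essentialPart σ.R))) : IsInnerDualDerivation σ D :=
  hD.isInner_of_restrictDual _ h fun _ hD' h₀ => hD'.isInner_of_apply_R_eq_zero hu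
    fun a b x => h₀ a _ (apply_mem_essentialPart σ.R b x)

end IsDualDerivation

theorem BanachBimodule.isEssential_restrict_restrict (σ : BanachBimodule A X) {u : Filter A}
    (hu : IsBoundedApproximateUnit u) :
    ((σ.restrict _ σ.isInvariant_essentialPart_L).restrict _
      (isInvariant_essentialPart_R _)).IsEssential := by
  have := hu.neBot
  refine ⟨eq_top_iff.2 fun x _ => mem_essentialPart_of_tendsto (u := u) ?_,
    eq_top_iff.2 fun x _ => mem_essentialPart_of_tendsto (u := u) ?_⟩
  · exact tendsto_subtype_rng.2 (tendsto_subtype_rng.2 (hu.tendsto_L_apply x.1.2))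
  · exact tendsto_subtype_rng.2 (hu.tendsto_R_apply x.2)

theorem amenable_of_forall_isEssential {u : Ultrafilter A}
    (hu : IsBoundedApproximateUnit (u : Filter A))
    (h : ∀ (X : Type) (_ : NormedAddCommGroup X) (_ : NormedSpace ℂ X) (_ : CompleteSpace X)
      (σ : BanachBimodule A X) (D : A →L[ℂ] X →L[ℂ] ℂ),
      σ.IsEssential → IsDualDerivation σ D → IsInnerDualDerivation σ D) :
    Amenable A := by
  intro X _ _ _ σ D hD
  have hDL := hD.restrict σ.isInvariant_essentialPart_L
  have hDLR := hDL.restrict (BanachBimodule.isInvariant_essentialPart_R _)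
  have := (isClosed_essentialPart σ.L).completeSpace_coe
  have := (isClosed_essentialPart
    (σ.restrict _ σ.isInvariant_essentialPart_L).R).completeSpace_coe
  exact hD.isInner_of_restrict_essentialPart_L hu <| hDL.isInner_of_restrict_essentialPart_R hu <|
    h _ _ _ inferInstance _ _ (σ.isEssential_restrict_restrict hu) hDLR

end EssentialPart

namespace IsProjTensorProduct

variable {A B T : Type*} [NonUnitalNormedRing A] [NormedSpace ℂ A] [NonUnitalNormedRing B]
  [NormedSpace ℂ B] [NonUnitalNormedRing T] [NormedSpace ℂ T] [CompleteSpace T]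

/-- The same algebra `T` as a projective tensor product with its factors exchanged. -/
noncomputable def flip (P : IsProjTensorProduct A B T) : IsProjTensorProduct B A T where
  ι := P.ι.flip
  norm_ι b a := (P.norm_ι a b).trans_eq (mul_comm _ _)
  ι_mul b d a c := P.ι_mul a c b d
  dense_span := by
    have hrange : (Set.range fun p : B × A => P.ι.flip p.1 p.2) =
        Set.range fun p : A × B => P.ι p.1 p.2 :=
      (Equiv.prodComm B A).surjective.range_comp fun p : A × B => P.ι p.1 p.2
    rw [hrange]
    exact P.dense_span
  lift E _ _ _ φ := by
    obtain ⟨Φ, hΦ, hΦ_norm⟩ := P.lift E _ _ ‹_› φ.flip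
    exact ⟨Φ, fun b a => hΦ a b, hΦ_norm.trans_eq φ.opNorm_flip⟩

variable (P : IsProjTensorProduct A B T)

theorem exists_lift {E : Type} [NormedAddCommGroup E] [NormedSpace ℂ E] [CompleteSpace E]
    (φ : A →L[ℂ] B →L[ℂ] E) : ∃ Φ : T →L[ℂ] E, ∀ a b, Φ (P.ι a b) = φ a b :=
  (P.lift E _ _ ‹_› φ).imp fun _ h => h.1

section Extensionality

variable {E : Type*} [NormedAddCommGroup E] [NormedSpace ℂ E]

theorem map_mem {N : Submodule ℂ E} (hN : IsClosed (N : Set E)) (f : T →L[ℂ] E)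
    (hf : ∀ a b, f (P.ι a b) ∈ N) (t : T) : f t ∈ N := by
  have hle : Submodule.span ℂ (Set.range fun p : A × B => P.ι p.1 p.2) ≤ N.comap (f : T →ₗ[ℂ] E) :=
    Submodule.span_le.2 <| Set.range_subset_iff.2 fun p => hf p.1 p.2
  exact (hN.preimage f.continuous).closure_subset_iff.2 hle (P.dense_span t)

theorem ext {f g : T →L[ℂ] E} (h : ∀ a b, f (P.ι a b) = g (P.ι a b)) : f = g :=
  ContinuousLinearMap.ext_on P.dense_span <| Set.forall_mem_range.2 fun p => h p.1 p.2

theorem ext₂ {f g : T →L[ℂ] T →L[ℂ] E}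
    (h : ∀ a b c d, f (P.ι a b) (P.ι c d) = g (P.ι a b) (P.ι c d)) : f = g :=
  P.ext fun a b => P.ext fun c d => h a b c d

end Extensionality

variable [IsScalarTower ℂ T T] [SMulCommClass ℂ T T]

theorem isBoundedApproximateUnit {u : Filter A} {v : Filter B} (hu : IsBoundedApproximateUnit u)
    (hv : IsBoundedApproximateUnit v) :
    IsBoundedApproximateUnit ((u ×ˢ v).map fun p => P.ι p.1 p.2) := by
  have := hu.neBot
  have := hv.neBot
  obtain ⟨Cu, hCu⟩ := hu.exists_norm_le
  obtain ⟨Cv, hCv⟩ := hv.exists_norm_le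
  have hbdd : ∀ᶠ p in u ×ˢ v, ‖P.ι p.1 p.2‖ ≤ Cu * Cv := by
    filter_upwards [hCu.prod_mk hCv] with p hp
    exact (P.norm_ι _ _).trans
      (mul_le_mul hp.1 hp.2 (norm_nonneg _) ((norm_nonneg _).trans hp.1))
  have htendsto (Λ : T →L[ℂ] T →L[ℂ] T) (hΛ : ∀ c d,
      Tendsto (fun p : A × B => Λ (P.ι p.1 p.2) (P.ι c d)) (u ×ˢ v) (𝓝 (P.ι c d))) (t : T) :
      Tendsto (fun p : A × B => Λ (P.ι p.1 p.2) t) (u ×ˢ v) (𝓝 t) :=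
    P.map_mem (isClosed_tendstoSubmodule (hbdd.mono fun p hp => Λ.le_opNorm_of_le hp) (.id ℂ T))
      (.id ℂ T) hΛ t
  have hι (c : A) (d : B) : Tendsto (fun p : A × B => P.ι p.1 p.2) (𝓝 c ×ˢ 𝓝 d) (𝓝 (P.ι c d)) := by
    rw [← nhds_prod_eq]
    exact P.ι.continuous₂.tendsto (c, d)
  refine ⟨⟨fun t => ?_, fun t => ?_⟩, Cu * Cv, hbdd⟩
  · refine tendsto_map'_iff.2 (htendsto (ContinuousLinearMap.mul ℂ T).flip (fun c d => ?_) t)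
    simpa [P.ι_mul, Function.comp_def] using (hι c d).comp
      ((hu.tendsto_mul_left c).prodMap (hv.tendsto_mul_left d))
  · refine tendsto_map'_iff.2 (htendsto (ContinuousLinearMap.mul ℂ T) (fun c d => ?_) t)
    simpa [P.ι_mul, Function.comp_def] using (hι c d).comp
      ((hu.tendsto_mul_right c).prodMap (hv.tendsto_mul_right d))

section Bimodules

variable {X : Type*} [NormedAddCommGroup X] [NormedSpace ℂ X]

/-- The bimodule over the projective tensor product given by two actions that satisfy the bimodule
axioms on elementary tensors. -/
def bimodule (L R : T →L[ℂ] X →L[ℂ] X)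
    (hL : ∀ a b c d x, L (P.ι (a * c) (b * d)) x = L (P.ι a b) (L (P.ι c d) x))
    (hR : ∀ a b c d x, R (P.ι (a * c) (b * d)) x = R (P.ι c d) (R (P.ι a b) x))
    (hLR : ∀ a b c d x, R (P.ι c d) (L (P.ι a b) x) = L (P.ι a b) (R (P.ι c d) x)) :
    BanachBimodule T X where
  L := L
  R := R
  L_mul s t := by
    have h : (ContinuousLinearMap.compL ℂ T T _ L).comp (.mul ℂ T) =
        (ContinuousLinearMap.compL ℂ X X X).bilinearComp L L :=
      P.ext₂ fun a b c d => by
        ext x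
        simpa [P.ι_mul] using hL a b c d x
    exact DFunLike.congr_fun (DFunLike.congr_fun h s) t
  R_mul s t := by
    have h : (ContinuousLinearMap.compL ℂ T T _ R).comp (.mul ℂ T) =
        ((ContinuousLinearMap.compL ℂ X X X).bilinearComp R R).flip :=
      P.ext₂ fun a b c d => by
        ext x
        simpa [P.ι_mul] using hR a b c d x
    exact DFunLike.congr_fun (DFunLike.congr_fun h s) t
  LR_comm s t x := by
    have h : ((ContinuousLinearMap.compL ℂ X X X).bilinearComp R L).flip =
        (ContinuousLinearMap.compL ℂ X X X).bilinearComp L R :=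
      P.ext₂ fun a b c d => ContinuousLinearMap.ext fun y => hLR a b c d y
    exact DFunLike.congr_fun (DFunLike.congr_fun (DFunLike.congr_fun h s) t) x

theorem isDualDerivation {τ : BanachBimodule T X} {D : T →L[ℂ] X →L[ℂ] ℂ}
    (hD : ∀ a b c d x, D (P.ι (a * c) (b * d)) x =
      D (P.ι c d) (τ.R (P.ι a b) x) + D (P.ι a b) (τ.L (P.ι c d) x)) :
    IsDualDerivation τ D := by
  have h : (ContinuousLinearMap.compL ℂ T T _ D).comp (.mul ℂ T) =
      ((ContinuousLinearMap.compL ℂ X X ℂ).bilinearComp D τ.R).flip +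
        (ContinuousLinearMap.compL ℂ X X ℂ).bilinearComp D τ.L :=
    P.ext₂ fun a b c d => by
      ext x
      simpa [P.ι_mul] using hD a b c d x
  exact fun s t x => DFunLike.congr_fun (DFunLike.congr_fun (DFunLike.congr_fun h s) t) x

end Bimodules

theorem exists_bimodule_of_commutesWith {X : Type} [NormedAddCommGroup X] [NormedSpace ℂ X]
    [CompleteSpace X] {σ : BanachBimodule A X} {τ : BanachBimodule B X} (h : σ.CommutesWith τ) :
    ∃ ρ : BanachBimodule T X, (∀ a b x, ρ.L (P.ι a b) x = σ.L a (τ.L b x)) ∧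
      ∀ a b x, ρ.R (P.ι a b) x = σ.R a (τ.R b x) := by
  obtain ⟨L, hL⟩ := P.exists_lift ((ContinuousLinearMap.compL ℂ X X X).bilinearComp σ.L τ.L)
  obtain ⟨R, hR⟩ := P.exists_lift ((ContinuousLinearMap.compL ℂ X X X).bilinearComp σ.R τ.R)
  have hL_apply a b x : L (P.ι a b) x = σ.L a (τ.L b x) := DFunLike.congr_fun (hL a b) x
  have hR_apply a b x : R (P.ι a b) x = σ.R a (τ.R b x) := DFunLike.congr_fun (hR a b) x
  refine ⟨P.bimodule L R ?_ ?_ ?_, hL_apply, hR_apply⟩ <;> intro a b c d x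
  · simp only [hL_apply, BanachBimodule.L_mul_apply, h.LL]
  · simp only [hR_apply, BanachBimodule.R_mul_apply, h.RR]
  · rw [hL_apply, hR_apply, hR_apply, hL_apply, ← h.LR, σ.LR_comm, τ.LR_comm, h.RL]

end IsProjTensorProduct

section TensorProduct

section InvariantFunctionals

variable {A B X : Type*} [NonUnitalNormedRing A] [NormedSpace ℂ A] [NonUnitalNormedRing B]
  [NormedSpace ℂ B] [NormedAddCommGroup X] [NormedSpace ℂ X]

namespace BanachBimodule

/-- The functionals `φ` on a bimodule with `a • φ = φ • a` for all `a`. -/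
def invariantFunctionals (σ : BanachBimodule A X) : Submodule ℂ (X →L[ℂ] ℂ) where
  carrier := {φ | ∀ a x, φ (σ.R a x) = φ (σ.L a x)}
  zero_mem' _ _ := rfl
  add_mem' hφ hψ a x := congrArg₂ (· + ·) (hφ a x) (hψ a x)
  smul_mem' c _ hφ a x := congrArg (c • ·) (hφ a x)

theorem CommutesWith.isInvariant_invariantFunctionals {σ : BanachBimodule A X}
    {τ : BanachBimodule B X} (h : σ.CommutesWith τ) :
    τ.dual.IsInvariant σ.invariantFunctionals where
  L_mem b φ hφ a x := by simpa [precomp, ← h.LR, ← h.RR] using hφ a (τ.R b x)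
  R_mem b φ hφ a x := by simpa [precomp, ← h.LL, ← h.RL] using hφ a (τ.L b x)

end BanachBimodule

theorem Amenable.exists_bidual_apply_eq_sub (hB : Amenable B) {W : Type} [NormedAddCommGroup W]
    [NormedSpace ℂ W] (ρ : BanachBimodule B W) {d : B →L[ℂ] W}
    (hd : ∀ b c, d (b * c) = ρ.L b (d c) + ρ.R c (d b)) :
    ∃ F : (W →L[ℂ] ℂ) →L[ℂ] ℂ, ∀ b ξ, ξ (d b) = F (ρ.dual.R b ξ) - F (ρ.dual.L b ξ) :=
  hB _ _ _ inferInstance ρ.dual ((NormedSpace.inclusionInDoubleDual ℂ W).comp d)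
    fun b c ξ => (congrArg ξ (hd b c)).trans (map_add ξ _ _)

theorem Amenable.exists_functional_of_forall_mem {X : Type} [NormedAddCommGroup X]
    [NormedSpace ℂ X] (hB : Amenable B) {τ : BanachBimodule B X} {W : Submodule ℂ (X →L[ℂ] ℂ)}
    (hW : τ.dual.IsInvariant W) {d : B →L[ℂ] X →L[ℂ] ℂ} (hd : IsDualDerivation τ d)
    (hdW : ∀ b, d b ∈ W) :
    ∃ f : X →L[ℂ] ℂ, (∀ b x, d b x = f (τ.R b x) - f (τ.L b x)) ∧
      ∀ x, (∀ φ ∈ W, φ x = 0) → f x = 0 := by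
  obtain ⟨F, hF⟩ := hB.exists_bidual_apply_eq_sub (τ.dual.restrict W hW)
    (d := d.codRestrict W hdW) fun b c => Subtype.ext (ContinuousLinearMap.ext (hd b c))
  let atPoint := restrictDual (NormedSpace.inclusionInDoubleDual ℂ X) W
  refine ⟨F.comp atPoint, fun b x => hF b (atPoint x), fun x hx => ?_⟩
  have hatPoint : atPoint x = 0 := ContinuousLinearMap.ext fun φ => hx φ φ.2
  exact (congrArg F hatPoint).trans (map_zero F)

theorem Amenable.exists_mem_invariantFunctionals {X : Type} [NormedAddCommGroup X]
    [NormedSpace ℂ X] (hB : Amenable B) {σ : BanachBimodule A X} {τ : BanachBimodule B X}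
    (h : σ.CommutesWith τ) {d : B →L[ℂ] X →L[ℂ] ℂ} (hd : IsDualDerivation τ d)
    (hd_mem : ∀ b, d b ∈ σ.invariantFunctionals) :
    ∃ f ∈ σ.invariantFunctionals, ∀ b x, d b x = f (τ.R b x) - f (τ.L b x) := by
  obtain ⟨f, hdf, hf⟩ :=
    hB.exists_functional_of_forall_mem h.isInvariant_invariantFunctionals hd hd_mem
  refine ⟨f, fun a x => sub_eq_zero.1 ?_, hdf⟩
  rw [← map_sub]
  exact hf _ fun φ hφ => by rw [map_sub, hφ a x, sub_self]

end InvariantFunctionals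

namespace IsProjTensorProduct

variable {A B T : Type*} [NonUnitalNormedRing A] [NormedSpace ℂ A] [NonUnitalNormedRing B]
  [NormedSpace ℂ B] [NonUnitalNormedRing T] [NormedSpace ℂ T] [CompleteSpace T]

section Slice

variable {X Y : Type*} [NormedAddCommGroup X] [NormedSpace ℂ X] [NormedAddCommGroup Y]
  [NormedSpace ℂ Y] {P : IsProjTensorProduct A B T} {u : Filter A} {v : Filter B}

/-- The slice of `Ψ` along an approximate unit `v` of `B`: informally, `Φ a = Ψ (a ⊗ 1)`. -/
def IsSlice (P : IsProjTensorProduct A B T) (v : Filter B) (Ψ : T →L[ℂ] X →L[ℂ] Y)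
    (Φ : A →L[ℂ] X →L[ℂ] Y) : Prop :=
  ∀ a x, Tendsto (fun b => Ψ (P.ι a b) x) v (𝓝 (Φ a x))

theorem exists_isSlice (P : IsProjTensorProduct A B T) (hv : IsBoundedApproximateUnit v)
    {Ψ : T →L[ℂ] X →L[ℂ] Y} (hΨ : ∀ a x, ∃ y, Tendsto (fun b => Ψ (P.ι a b) x) v (𝓝 y)) :
    ∃ Φ, P.IsSlice v Ψ Φ := by
  have := hv.neBot
  obtain ⟨C, hC⟩ := hv.exists_norm_le
  exact exists_clm₂_tendsto (Ψ := fun b => Ψ.comp (P.ι.flip b))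
    (hC.mono fun b hb => (Ψ.opNorm_comp_le _).trans
      (mul_le_mul_of_nonneg_left (P.ι.flip.le_opNorm_of_le hb) (norm_nonneg Ψ))) hΨ

theorem exists_isSlice_dual (P : IsProjTensorProduct A B T) {v : Ultrafilter B}
    (hv : IsBoundedApproximateUnit (v : Filter B)) (D : T →L[ℂ] X →L[ℂ] ℂ) :
    ∃ d, P.IsSlice v D d :=
  P.exists_isSlice hv fun a x => by
    obtain ⟨ψ, hψ⟩ := hv.exists_dual_tendsto (D.comp (P.ι a))
    exact ⟨ψ x, hψ x⟩

theorem exists_isSlice_of_essentialPart_eq_top [CompleteSpace X] (P : IsProjTensorProduct A B T)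
    (hv : IsBoundedApproximateUnit v) {Λ : T →L[ℂ] X →L[ℂ] X} (hΛ : essentialPart Λ = ⊤)
    (hΛ_tendsto : ∀ a c d x, ∃ y, Tendsto (fun b => Λ (P.ι a b) (Λ (P.ι c d) x)) v (𝓝 y)) :
    ∃ Φ, P.IsSlice v Λ Φ := by
  have := hv.neBot
  obtain ⟨C, hC⟩ := hv.exists_norm_le
  refine P.exists_isSlice hv fun a x => ?_
  have hclosed := isClosed_convergenceSubmodule (Ψ := fun b => Λ (P.ι a b))
    (hC.mono fun b hb => (Λ.comp (P.ι a)).le_opNorm_of_le hb)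
  have hle := essentialPart_le hclosed fun t x =>
    P.map_mem hclosed (Λ.flip x) (fun c d => hΛ_tendsto a c d x) t
  exact hle (hΛ ▸ Submodule.mem_top)

namespace IsSlice

theorem sub {Ψ Ψ' : T →L[ℂ] X →L[ℂ] Y} {Φ Φ' : A →L[ℂ] X →L[ℂ] Y} (h : P.IsSlice v Ψ Φ)
    (h' : P.IsSlice v Ψ' Φ') : P.IsSlice v (Ψ - Ψ') (Φ - Φ') :=
  fun a x => (h a x).sub (h' a x)

theorem apply_comm [v.NeBot] {Λ : T →L[ℂ] X →L[ℂ] X} {Φ : A →L[ℂ] X →L[ℂ] X}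
    (h : P.IsSlice v Λ Φ) {f : X →L[ℂ] X} {a : A}
    (hf : ∀ b x, f (Λ (P.ι a b) x) = Λ (P.ι a b) (f x)) (x : X) : f (Φ a x) = Φ a (f x) := by
  have hlim := (f.continuous.tendsto _).comp (h a x)
  simp only [Function.comp_def, hf] at hlim
  exact tendsto_nhds_unique hlim (h a (f x))

variable {σ : BanachBimodule T X} {Φ : A →L[ℂ] X →L[ℂ] X}

theorem L_apply_apply (h : P.IsSlice v σ.L Φ) (hv : IsBoundedApproximateUnit v) (a c : A) (b : B)
    (x : X) : σ.L (P.ι a b) (Φ c x) = σ.L (P.ι (a * c) b) x := by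
  have := hv.neBot
  have hlim := ((σ.L (P.ι a b)).continuous.tendsto _).comp (h c x)
  simp only [Function.comp_def, ← BanachBimodule.L_mul_apply, P.ι_mul] at hlim
  exact tendsto_nhds_unique hlim
    (hv.tendsto_apply_mul_right ((σ.L.flip x).comp (P.ι (a * c))) b)

theorem R_apply_apply (h : P.IsSlice v σ.R Φ) (hv : IsBoundedApproximateUnit v) (a c : A) (b : B)
    (x : X) : σ.R (P.ι a b) (Φ c x) = σ.R (P.ι (c * a) b) x := by
  have := hv.neBot
  have hlim := ((σ.R (P.ι a b)).continuous.tendsto _).comp (h c x)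
  simp only [Function.comp_def, ← BanachBimodule.R_mul_apply, P.ι_mul] at hlim
  exact tendsto_nhds_unique hlim
    (hv.tendsto_apply_mul_left ((σ.R.flip x).comp (P.ι (c * a))) b)

theorem apply_apply_L (h : P.IsSlice v σ.L Φ) {Φ' : B →L[ℂ] X →L[ℂ] X}
    (h' : P.flip.IsSlice u σ.L Φ') (hu : IsBoundedApproximateUnit u)
    (hv : IsBoundedApproximateUnit v) (a : A) (b : B) (x : X) :
    Φ a (Φ' b x) = σ.L (P.ι a b) x := by
  have := hv.neBot
  have hprod (d : B) : σ.L (P.ι a d) (Φ' b x) = σ.L (P.ι a (d * b)) x :=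
    h'.L_apply_apply hu d b a x
  have hlim := h a (Φ' b x)
  simp only [hprod] at hlim
  exact tendsto_nhds_unique hlim (hv.tendsto_apply_mul_left ((σ.L.flip x).comp (P.ι a)) b)

theorem apply_apply_R (h : P.IsSlice v σ.R Φ) {Φ' : B →L[ℂ] X →L[ℂ] X}
    (h' : P.flip.IsSlice u σ.R Φ') (hu : IsBoundedApproximateUnit u)
    (hv : IsBoundedApproximateUnit v) (a : A) (b : B) (x : X) :
    Φ a (Φ' b x) = σ.R (P.ι a b) x := by
  have := hv.neBot
  have hprod (d : B) : σ.R (P.ι a d) (Φ' b x) = σ.R (P.ι a (b * d)) x :=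
    h'.R_apply_apply hu d b a x
  have hlim := h a (Φ' b x)
  simp only [hprod] at hlim
  exact tendsto_nhds_unique hlim (hv.tendsto_apply_mul_right ((σ.R.flip x).comp (P.ι a)) b)

end IsSlice

theorem exists_isSlice_L [CompleteSpace X] (P : IsProjTensorProduct A B T)
    (hv : IsBoundedApproximateUnit v) {σ : BanachBimodule T X} (hσ : σ.IsEssential) :
    ∃ Φ, P.IsSlice v σ.L Φ := by
  refine P.exists_isSlice_of_essentialPart_eq_top hv hσ.L_eq_top fun a c d x =>
    ⟨σ.L (P.ι (a * c) d) x, ?_⟩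
  simp only [← BanachBimodule.L_mul_apply, P.ι_mul]
  exact hv.tendsto_apply_mul_left ((σ.L.flip x).comp (P.ι (a * c))) d

theorem exists_isSlice_R [CompleteSpace X] (P : IsProjTensorProduct A B T)
    (hv : IsBoundedApproximateUnit v) {σ : BanachBimodule T X} (hσ : σ.IsEssential) :
    ∃ Φ, P.IsSlice v σ.R Φ := by
  refine P.exists_isSlice_of_essentialPart_eq_top hv hσ.R_eq_top fun a c d x =>
    ⟨σ.R (P.ι (c * a) d) x, ?_⟩
  simp only [← BanachBimodule.R_mul_apply, P.ι_mul]
  exact hv.tendsto_apply_mul_right ((σ.R.flip x).comp (P.ι (c * a))) d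

/-- The `A`-bimodule obtained by slicing both actions of a bimodule over the tensor product. -/
structure IsSliceBimodule (P : IsProjTensorProduct A B T) (v : Filter B) (σ : BanachBimodule T X)
    (τ : BanachBimodule A X) : Prop where
  L : P.IsSlice v σ.L τ.L
  R : P.IsSlice v σ.R τ.R

theorem exists_isSliceBimodule [CompleteSpace X] (P : IsProjTensorProduct A B T)
    (hv : IsBoundedApproximateUnit v) {σ : BanachBimodule T X} (hσ : σ.IsEssential) :
    ∃ τ, P.IsSliceBimodule v σ τ := by
  have := hv.neBot
  obtain ⟨L, hL⟩ := P.exists_isSlice_L hv hσ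
  obtain ⟨R, hR⟩ := P.exists_isSlice_R hv hσ
  refine ⟨⟨L, R, fun a c => ?_, fun a c => ?_, fun a c => ?_⟩, hL, hR⟩
  · ext x
    exact tendsto_nhds_unique (hL (a * c) x) (by simpa [hL.L_apply_apply hv] using hL a (L c x))
  · ext x
    exact tendsto_nhds_unique (hR (a * c) x) (by simpa [hR.R_apply_apply hv] using hR c (R a x))
  · exact hL.apply_comm fun b x => (hR.apply_comm (fun d y => (σ.LR_comm _ _ y).symm) x).symm

namespace IsSliceBimodule

variable {σ : BanachBimodule T X} {τ : BanachBimodule A X} {ρ : BanachBimodule B X}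

theorem commutesWith (hτ : P.IsSliceBimodule v σ τ) (hρ : P.flip.IsSliceBimodule u σ ρ)
    (hu : IsBoundedApproximateUnit u) (hv : IsBoundedApproximateUnit v) : τ.CommutesWith ρ := by
  have := hu.neBot
  have := hv.neBot
  refine ⟨fun a b x => ?_, fun a b x => ?_, fun a b x => ?_, fun a b x => ?_⟩
  · exact (hτ.L.apply_apply_L hρ.L hu hv a b x).trans
      (hρ.L.apply_apply_L (P := P.flip) hτ.L hv hu b a x).symm
  · refine hρ.R.apply_comm (fun c y => ?_) x
    exact (hτ.L.apply_comm (fun d z => σ.LR_comm _ _ z) y).symm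
  · refine hρ.L.apply_comm (fun c y => ?_) x
    exact (hτ.R.apply_comm (fun d z => (σ.LR_comm _ _ z).symm) y).symm
  · exact (hτ.R.apply_apply_R hρ.R hu hv a b x).trans
      (hρ.R.apply_apply_R (P := P.flip) hτ.R hv hu b a x).symm

theorem innerDerivation (hτ : P.IsSliceBimodule v σ τ) (f : X →L[ℂ] ℂ) :
    P.IsSlice v (σ.innerDerivation f) (τ.innerDerivation f) :=
  fun a x => (f.continuous.tendsto _).comp ((hτ.R a x).sub (hτ.L a x))

variable {D : T →L[ℂ] X →L[ℂ] ℂ} {d : A →L[ℂ] X →L[ℂ] ℂ}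

theorem derivation_mul_apply_right (hτ : P.IsSliceBimodule v σ τ) (hv : IsBoundedApproximateUnit v)
    (hD : IsDualDerivation σ D) (hd : P.IsSlice v D d) (a c : A) (b : B) (x : X) :
    D (P.ι (a * c) b) x = d c (σ.R (P.ι a b) x) + D (P.ι a b) (τ.L c x) := by
  have := hv.neBot
  have hlim := (hd c (σ.R (P.ι a b) x)).add
    (((D (P.ι a b)).continuous.tendsto _).comp (hτ.L c x))
  simp only [Function.comp_def, ← hD _ _ x, P.ι_mul] at hlim
  exact tendsto_nhds_unique (hv.tendsto_apply_mul_right ((D.flip x).comp (P.ι (a * c))) b) hlim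

theorem derivation_mul_apply_left (hτ : P.IsSliceBimodule v σ τ) (hv : IsBoundedApproximateUnit v)
    (hD : IsDualDerivation σ D) (hd : P.IsSlice v D d) (a c : A) (b : B) (x : X) :
    D (P.ι (a * c) b) x = D (P.ι c b) (τ.R a x) + d a (σ.L (P.ι c b) x) := by
  have := hv.neBot
  have hlim := (((D (P.ι c b)).continuous.tendsto _).comp (hτ.R a x)).add
    (hd a (σ.L (P.ι c b) x))
  simp only [Function.comp_def, ← hD _ _ x, P.ι_mul] at hlim
  exact tendsto_nhds_unique (hv.tendsto_apply_mul_left ((D.flip x).comp (P.ι (a * c))) b) hlim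

theorem isDualDerivation (hτ : P.IsSliceBimodule v σ τ) (hv : IsBoundedApproximateUnit v)
    (hD : IsDualDerivation σ D) (hd : P.IsSlice v D d) : IsDualDerivation τ d := by
  have := hv.neBot
  intro a c x
  have hlim := (((d c).continuous.tendsto _).comp (hτ.R a x)).add (hd a (τ.L c x))
  simp only [Function.comp_def, ← hτ.derivation_mul_apply_right hv hD hd] at hlim
  exact tendsto_nhds_unique (hd (a * c) x) hlim

variable {d' : B →L[ℂ] X →L[ℂ] ℂ}

theorem apply_eq_slice_apply_L (hτ : P.IsSliceBimodule v σ τ) (hu : IsBoundedApproximateUnit u)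
    (hv : IsBoundedApproximateUnit v) (hD : IsDualDerivation σ D) (hd : P.IsSlice v D 0)
    (hd' : P.flip.IsSlice u D d') (a : A) (b : B) (x : X) :
    D (P.ι a b) x = d' b (τ.L a x) := by
  have := hu.neBot
  have hmul (c : A) : D (P.ι (c * a) b) x = D (P.ι c b) (τ.L a x) := by
    simpa using hτ.derivation_mul_apply_right hv hD hd c a b x
  have hlim := hu.tendsto_apply_mul_left ((D.flip x).comp (P.ι.flip b)) a
  exact tendsto_nhds_unique hlim ((hd' b (τ.L a x)).congr fun c => (hmul c).symm)

theorem apply_eq_slice_apply_R (hτ : P.IsSliceBimodule v σ τ) (hu : IsBoundedApproximateUnit u)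
    (hv : IsBoundedApproximateUnit v) (hD : IsDualDerivation σ D) (hd : P.IsSlice v D 0)
    (hd' : P.flip.IsSlice u D d') (a : A) (b : B) (x : X) :
    D (P.ι a b) x = d' b (τ.R a x) := by
  have := hu.neBot
  have hmul (c : A) : D (P.ι (a * c) b) x = D (P.ι c b) (τ.R a x) := by
    simpa using hτ.derivation_mul_apply_left hv hD hd a c b x
  have hlim := hu.tendsto_apply_mul_right ((D.flip x).comp (P.ι.flip b)) a
  exact tendsto_nhds_unique hlim ((hd' b (τ.R a x)).congr fun c => (hmul c).symm)

end IsSliceBimodule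

end Slice

variable {P : IsProjTensorProduct A B T} {u : Ultrafilter A} {v : Ultrafilter B}
  {X : Type} [NormedAddCommGroup X] [NormedSpace ℂ X] {σ : BanachBimodule T X}

theorem isInner_of_isSlice_zero (hu : IsBoundedApproximateUnit (u : Filter A))
    (hv : IsBoundedApproximateUnit (v : Filter B)) (hB : Amenable B)
    {τ : BanachBimodule A X} {ρ : BanachBimodule B X} (hτ : P.IsSliceBimodule v σ τ)
    (hρ : P.flip.IsSliceBimodule u σ ρ) {D : T →L[ℂ] X →L[ℂ] ℂ} (hD : IsDualDerivation σ D)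
    (hD₀ : P.IsSlice v D 0) : IsInnerDualDerivation σ D := by
  have hcomm := hτ.commutesWith hρ hu hv
  obtain ⟨d, hd⟩ := P.flip.exists_isSlice_dual hu D
  have hDL := hτ.apply_eq_slice_apply_L hu hv hD hD₀ hd
  have hDR := hτ.apply_eq_slice_apply_R hu hv hD hD₀ hd
  obtain ⟨f, hf, hdf⟩ := hB.exists_mem_invariantFunctionals hcomm (hρ.isDualDerivation hu hD hd)
    fun b a x => (hDR a b x).symm.trans (hDL a b x)
  have hDf : D = σ.innerDerivation f := P.ext fun a b => by
    ext x
    calc D (P.ι a b) x = f (ρ.R b (τ.R a x)) - f (ρ.L b (τ.R a x)) := by rw [hDR, hdf]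
      _ = f (τ.R a (ρ.R b x)) - f (τ.L a (ρ.L b x)) := by
        rw [← hcomm.RR, ← hcomm.RL, hf a (ρ.L b x)]
      _ = σ.innerDerivation f (P.ι a b) x := by
        rw [hτ.R.apply_apply_R hρ.R hu hv, hτ.L.apply_apply_L hρ.L hu hv, σ.innerDerivation_apply]
  exact ⟨f, fun t x => by rw [hDf, σ.innerDerivation_apply]⟩

theorem isInner_of_isEssential [CompleteSpace X] (P : IsProjTensorProduct A B T)
    (hu : IsBoundedApproximateUnit (u : Filter A)) (hv : IsBoundedApproximateUnit (v : Filter B))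
    (hA : Amenable A) (hB : Amenable B) (hσ : σ.IsEssential) {D : T →L[ℂ] X →L[ℂ] ℂ}
    (hD : IsDualDerivation σ D) : IsInnerDualDerivation σ D := by
  obtain ⟨τ, hτ⟩ := P.exists_isSliceBimodule hv hσ
  obtain ⟨ρ, hρ⟩ := P.flip.exists_isSliceBimodule hu hσ
  obtain ⟨d, hd⟩ := P.exists_isSlice_dual hv D
  obtain ⟨g, hg⟩ := hA X _ _ ‹_› τ d (hτ.isDualDerivation hv hD hd)
  have hdg : d = τ.innerDerivation g := by
    ext a x
    rw [hg, τ.innerDerivation_apply]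
  have hslice : P.IsSlice v (D - σ.innerDerivation g) 0 := by
    rw [← sub_eq_zero.2 hdg]
    exact hd.sub (hτ.innerDerivation g)
  exact (isInner_of_isSlice_zero hu hv hB hτ hρ (hD.sub_innerDerivation g)
    hslice).of_sub_innerDerivation

protected theorem amenable [IsScalarTower ℂ T T] [SMulCommClass ℂ T T]
    (P : IsProjTensorProduct A B T) (hu : IsBoundedApproximateUnit (u : Filter A))
    (hv : IsBoundedApproximateUnit (v : Filter B)) (hA : Amenable A) (hB : Amenable B) :
    Amenable T := by
  have hw := P.isBoundedApproximateUnit hu hv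
  have := hw.neBot
  exact amenable_of_forall_isEssential (hw.mono (Ultrafilter.of_le _))
    fun X _ _ _ σ D hσ hD => P.isInner_of_isEssential hu hv hA hB hσ hD

end IsProjTensorProduct

end TensorProduct

section Converse

theorem BanachBimodule.commutesWith_precomp_postcomp {A B X Y : Type*} [NonUnitalNormedRing A]
    [NormedSpace ℂ A] [NonUnitalNormedRing B] [NormedSpace ℂ B] [NormedAddCommGroup X]
    [NormedSpace ℂ X] [NormedAddCommGroup Y] [NormedSpace ℂ Y] (σ : BanachBimodule A X)
    (τ : BanachBimodule B Y) : (σ.precomp Y).CommutesWith (τ.postcomp X) :=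
  ⟨fun _ _ _ => rfl, fun _ _ _ => rfl, fun _ _ _ => rfl, fun _ _ _ => rfl⟩

/-- A continuous homomorphism of bimodules `m : A → X*`. -/
structure IsDualBimoduleHom {A X : Type*} [NonUnitalNormedRing A] [NormedSpace ℂ A]
    [NormedAddCommGroup X] [NormedSpace ℂ X] (σ : BanachBimodule A X) (m : A →L[ℂ] X →L[ℂ] ℂ) :
    Prop where
  mul_apply_R : ∀ a b x, m (a * b) x = m b (σ.R a x)
  mul_apply_L : ∀ a b x, m (a * b) x = m a (σ.L b x)

namespace BanachBimodule

variable {A V : Type*} [NonUnitalNormedRing A] [NormedSpace ℂ A]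
  [NonUnitalNormedRing V] [NormedSpace ℂ V] [IsScalarTower ℂ V V] [SMulCommClass ℂ V V]

/-- The bimodule structure on a normed algebra `V` induced by a homomorphism `β : A → V`. -/
noncomputable def ofHom (β : A →L[ℂ] V) (hβ : ∀ a b, β (a * b) = β a * β b) :
    BanachBimodule A V where
  L := (ContinuousLinearMap.mul ℂ V).comp β
  R := (ContinuousLinearMap.mul ℂ V).flip.comp β
  L_mul a b := by
    ext v
    simp [hβ, mul_assoc]
  R_mul a b := by
    ext v
    simp [hβ, mul_assoc]
  LR_comm a b v := mul_assoc _ _ _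

theorem isDualBimoduleHom_ofHom (β : A →L[ℂ] V) (hβ : ∀ a b, β (a * b) = β a * β b) :
    IsDualBimoduleHom (ofHom β hβ).dual
      ((NormedSpace.inclusionInDoubleDual ℂ V).comp β) where
  mul_apply_R a b S := congrArg S (hβ a b)
  mul_apply_L a b S := congrArg S (hβ a b)

end BanachBimodule

variable {A B T : Type*} [NonUnitalNormedRing A] [NormedSpace ℂ A]
  [NonUnitalNormedRing B] [NormedSpace ℂ B] [NonUnitalNormedRing T] [NormedSpace ℂ T]
  [IsScalarTower ℂ T T] [SMulCommClass ℂ T T] [CompleteSpace T]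
  {U X Y : Type} [NormedAddCommGroup U] [NormedSpace ℂ U]
  [NormedAddCommGroup X] [NormedSpace ℂ X] [NormedAddCommGroup Y] [NormedSpace ℂ Y]

namespace IsProjTensorProduct

theorem exists_bimodule_clm [CompleteSpace Y] (P : IsProjTensorProduct A B T)
    (σ : BanachBimodule A U) (τ : BanachBimodule B Y) :
    ∃ ρ : BanachBimodule T (U →L[ℂ] Y),
      (∀ a b w z, ρ.L (P.ι a b) w z = τ.L b (w (σ.R a z))) ∧
        ∀ a b w z, ρ.R (P.ι a b) w z = τ.R b (w (σ.L a z)) := by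
  obtain ⟨ρ, hL, hR⟩ := P.exists_bimodule_of_commutesWith (σ.commutesWith_precomp_postcomp τ)
  exact ⟨ρ, fun a b w z => DFunLike.congr_fun (hL a b w) z,
    fun a b w z => DFunLike.congr_fun (hR a b w) z⟩

theorem exists_isDualDerivation_clm (P : IsProjTensorProduct A B T) {σ : BanachBimodule A U}
    {τ : BanachBimodule B Y} {D : A →L[ℂ] U} {m : B →L[ℂ] Y →L[ℂ] ℂ}
    (hD : ∀ a c, D (a * c) = σ.L a (D c) + σ.R c (D a)) (hm : IsDualBimoduleHom τ m)
    {ρ : BanachBimodule T (U →L[ℂ] Y)}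
    (hL : ∀ a b w z, ρ.L (P.ι a b) w z = τ.L b (w (σ.R a z)))
    (hR : ∀ a b w z, ρ.R (P.ι a b) w z = τ.R b (w (σ.L a z))) :
    ∃ Δ : T →L[ℂ] (U →L[ℂ] Y) →L[ℂ] ℂ,
      IsDualDerivation ρ Δ ∧ ∀ a b w, Δ (P.ι a b) w = m b (w (D a)) := by
  let applyD : A →L[ℂ] (U →L[ℂ] Y) →L[ℂ] Y := (ContinuousLinearMap.id ℂ (U →L[ℂ] Y)).flip.comp D
  obtain ⟨Δ, hΔ⟩ := P.flip.exists_lift (E := (U →L[ℂ] Y) →L[ℂ] ℂ)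
    ((ContinuousLinearMap.compL ℂ (U →L[ℂ] Y) Y ℂ).bilinearComp m applyD)
  have hΔ_apply a b w : Δ (P.ι a b) w = m b (w (D a)) := DFunLike.congr_fun (hΔ b a) w
  refine ⟨Δ, P.isDualDerivation fun a b c d w => ?_, hΔ_apply⟩
  rw [hΔ_apply, hΔ_apply, hΔ_apply, hL, hR, ← hm.mul_apply_R, ← hm.mul_apply_L, hD, map_add,
    map_add]

theorem exists_forall_mul_apply_eq_sub [CompleteSpace Y] (P : IsProjTensorProduct A B T)
    (hT : Amenable T) {σ : BanachBimodule A U} {τ : BanachBimodule B Y} {D : A →L[ℂ] U}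
    {m : B →L[ℂ] Y →L[ℂ] ℂ} (hD : ∀ a c, D (a * c) = σ.L a (D c) + σ.R c (D a))
    (hm : IsDualBimoduleHom τ m) :
    ∃ G : (U →L[ℂ] ℂ) →L[ℂ] Y →L[ℂ] ℂ, ∀ a b f y,
      m b y * f (D a) = G (σ.dual.R a f) (τ.R b y) - G (σ.dual.L a f) (τ.L b y) := by
  obtain ⟨ρ, hL, hR⟩ := P.exists_bimodule_clm σ τ
  obtain ⟨Δ, hΔ, hΔ_apply⟩ := P.exists_isDualDerivation_clm hD hm hL hR
  obtain ⟨F, hF⟩ := hT _ _ _ inferInstance ρ Δ hΔ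
  let rankOne : (U →L[ℂ] ℂ) →L[ℂ] Y →L[ℂ] U →L[ℂ] Y := ContinuousLinearMap.smulRightL ℂ U Y
  have hrankOne_L a b f y : ρ.L (P.ι a b) (rankOne f y) = rankOne (σ.dual.L a f) (τ.L b y) := by
    ext z
    simp [rankOne, hL, BanachBimodule.precomp]
  have hrankOne_R a b f y : ρ.R (P.ι a b) (rankOne f y) = rankOne (σ.dual.R a f) (τ.R b y) := by
    ext z
    simp [rankOne, hR, BanachBimodule.precomp]
  refine ⟨(ContinuousLinearMap.compL ℂ Y (U →L[ℂ] Y) ℂ F).comp rankOne, fun a b f y => ?_⟩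
  calc m b y * f (D a) = Δ (P.ι a b) (rankOne f y) := by simp [hΔ_apply, rankOne, mul_comm]
    _ = F (rankOne (σ.dual.R a f) (τ.R b y)) - F (rankOne (σ.dual.L a f) (τ.L b y)) := by
      rw [hF, hrankOne_L, hrankOne_R]

theorem isInner_of_isDualBimoduleHom [CompleteSpace Y] (P : IsProjTensorProduct A B T)
    (hT : Amenable T) {v : Filter B} (hv : IsBoundedApproximateUnit v) {τ : BanachBimodule B Y}
    {m : B →L[ℂ] Y →L[ℂ] ℂ} (hm : IsDualBimoduleHom τ m) (hm₀ : m ≠ 0)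
    {σ : BanachBimodule A X} {D : A →L[ℂ] X →L[ℂ] ℂ} (hD : IsDualDerivation σ D) :
    IsInnerDualDerivation σ D := by
  have := hv.neBot
  obtain ⟨G₀, hG₀⟩ := P.exists_forall_mul_apply_eq_sub (σ := σ.dual) hT
    (fun a c => ContinuousLinearMap.ext (hD a c)) hm
  let G : X →L[ℂ] Y →L[ℂ] ℂ := G₀.comp (NormedSpace.inclusionInDoubleDual ℂ X)
  have hG (a b x y) : m b y * D a x = G (σ.R a x) (τ.R b y) - G (σ.L a x) (τ.L b y) :=
    hG₀ a b (NormedSpace.inclusionInDoubleDual ℂ X x) y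
  obtain ⟨c, y, hcy⟩ : ∃ c y, m c y ≠ 0 := by
    by_contra! h
    exact hm₀ (ContinuousLinearMap.ext fun c => ContinuousLinearMap.ext (h c))
  obtain ⟨d, hcd⟩ : ∃ d, m (c * d) y ≠ 0 :=
    ((hv.tendsto_apply_mul_right (m.flip y) c).eventually_ne hcy).exists
  rw [hm.mul_apply_R] at hcd
  -- Both actions of an approximate unit of `B` on `d • y • c` tend to the identity.
  have hG_approx (a : A) (x : X) (b : B) : m (b * d) (τ.R c y) * D a x =
      G (σ.R a x) (τ.L d (τ.R (c * b) y)) - G (σ.L a x) (τ.L (b * d) (τ.R c y)) := by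
    rw [τ.R_mul_apply, ← τ.LR_comm, τ.L_mul_apply, ← hG, ← hm.mul_apply_L]
  have hG_lim (a : A) (x : X) : m d (τ.R c y) * D a x =
      G (σ.R a x) (τ.L d (τ.R c y)) - G (σ.L a x) (τ.L d (τ.R c y)) := by
    have hm_lim := (hv.tendsto_apply_mul_left (m.flip (τ.R c y)) d).mul_const (D a x)
    have hR_lim :=
      hv.tendsto_apply_mul_right ((G (σ.R a x)).comp ((τ.L d).comp (τ.R.flip y))) c
    have hL_lim := hv.tendsto_apply_mul_left ((G (σ.L a x)).comp (τ.L.flip (τ.R c y))) d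
    exact tendsto_nhds_unique hm_lim ((hR_lim.sub hL_lim).congr fun b => (hG_approx a x b).symm)
  refine ⟨(m d (τ.R c y))⁻¹ • G.flip (τ.L d (τ.R c y)), fun a x => ?_⟩
  simp only [smul_apply, ContinuousLinearMap.flip_apply, ← smul_sub, ← hG_lim]
  exact (inv_mul_cancel_left₀ hcd _).symm

theorem isInner_of_hom (P : IsProjTensorProduct A B T) (hT : Amenable T) {v : Filter B}
    (hv : IsBoundedApproximateUnit v) {V : Type} [NonUnitalNormedRing V] [NormedSpace ℂ V]
    [IsScalarTower ℂ V V] [SMulCommClass ℂ V V] {β : B →L[ℂ] V}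
    (hβ : ∀ a b, β (a * b) = β a * β b) (hβ₀ : β ≠ 0) {σ : BanachBimodule A X}
    {D : A →L[ℂ] X →L[ℂ] ℂ} (hD : IsDualDerivation σ D) : IsInnerDualDerivation σ D := by
  refine P.isInner_of_isDualBimoduleHom hT hv (BanachBimodule.isDualBimoduleHom_ofHom β hβ)
    (fun h => hβ₀ ?_) hD
  ext b
  exact SeparatingDual.eq_zero_of_forall_dual_eq_zero (R := ℂ)
    fun S => DFunLike.congr_fun (DFunLike.congr_fun h b) S

theorem amenable_of_amenable_self (P : IsProjTensorProduct A A T) {u : Ultrafilter A}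
    (hu : IsBoundedApproximateUnit (u : Filter A)) (hT : Amenable T) : Amenable A := by
  intro X _ _ _ σ D hD
  by_cases hσ : σ.L = 0
  · exact hD.isInner_of_apply_L_eq_zero hu fun a b x => by simp [hσ]
  · exact P.isInner_of_hom hT hu σ.L_mul hσ hD

theorem amenable_of_amenable_mulOpposite (P : IsProjTensorProduct A Aᵐᵒᵖ T) {u : Ultrafilter A}
    (hu : IsBoundedApproximateUnit (u : Filter A)) (hT : Amenable T) : Amenable A := by
  intro X _ _ _ σ D hD
  by_cases hσ : σ.R = 0
  · exact hD.isInner_of_apply_R_eq_zero hu fun a b x => by simp [hσ]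
  · exact P.isInner_of_hom hT hu.map_op
      (β := σ.R.comp (opContinuousLinearEquiv ℂ).symm.toContinuousLinearMap)
      (fun a b => σ.R_mul b.unop a.unop)
      (fun h => hσ (ContinuousLinearMap.ext fun a => DFunLike.congr_fun h (op a))) hD

end IsProjTensorProduct

end Converse

theorem stmt9_general {A T₁ T₂ : Type*} [NonUnitalNormedRing A] [NormedSpace ℂ A]
    [NonUnitalNormedRing T₁] [NormedSpace ℂ T₁] [IsScalarTower ℂ T₁ T₁] [SMulCommClass ℂ T₁ T₁]
    [CompleteSpace T₁] [NonUnitalNormedRing T₂] [NormedSpace ℂ T₂] [IsScalarTower ℂ T₂ T₂]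
    [SMulCommClass ℂ T₂ T₂] [CompleteSpace T₂] (P₁ : IsProjTensorProduct A A T₁)
    (P₂ : IsProjTensorProduct A Aᵐᵒᵖ T₂) (hA : HasBAI A) :
    (Amenable A ↔ Amenable T₁) ∧ (Amenable A ↔ Amenable T₂) := by
  obtain ⟨u, hu⟩ := hA.exists_ultrafilter
  have hu_op : IsBoundedApproximateUnit (u.map op : Filter Aᵐᵒᵖ) := hu.map_op
  exact ⟨⟨fun h => P₁.amenable hu hu h h, P₁.amenable_of_amenable_self hu⟩,
    ⟨fun h => P₂.amenable hu hu_op h h.mulOpposite, P₂.amenable_of_amenable_mulOpposite hu⟩⟩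

/-- for a Banach algebra `A` with a bounded approximate identity, the
amenability of `A`, of `A ⊗̂ A`, and of `A ⊗̂ Aᵒᵖ` are equivalent. -/
theorem stmt9 {A T₁ T₂ : Type*} [NonUnitalNormedRing A] [NormedSpace ℂ A] [IsScalarTower ℂ A A] [SMulCommClass ℂ A A] [CompleteSpace A] [NonUnitalNormedRing T₁] [NormedSpace ℂ T₁] [IsScalarTower ℂ T₁ T₁] [SMulCommClass ℂ T₁ T₁] [CompleteSpace T₁] [NonUnitalNormedRing T₂] [NormedSpace ℂ T₂] [IsScalarTower ℂ T₂ T₂] [SMulCommClass ℂ T₂ T₂] [CompleteSpace T₂]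
    (P₁ : IsProjTensorProduct A A T₁) (P₂ : IsProjTensorProduct A Aᵐᵒᵖ T₂)
    (hA : HasBAI A) :
    (Amenable A ↔ Amenable T₁) ∧ (Amenable A ↔ Amenable T₂) := by
  exact stmt9_general P₁ P₂ hA
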